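/- Let p be an odd prime, s ≥ 1 an integer, and r ≥ 2 an integer such that 2r divides p^s + 1 or 2r divides p^s − 1. Set η² = −(λ − λ^{−1})²/(2r) ∈ ℂ. Then (η²)^{p^s} ≡ η² (mod p) in A_r, i.e. (η²)^{p^s} − η² ∈ p·A_r. (Second part of Lemma 3 of the paper.) -/

import Mathlib

open Complex Real

/-!
Modulo `p`, the map `x ↦ x ^ p ^ s` is a ring homomorphism, so the elements it fixes form a subring
containing the integers and closed under inversion of units. If `λ ^ p ^ s` is `λ` or `λ⁻¹`, this
map fixes or swaps `λ` and `λ⁻¹`; in both cases it fixes `λ + λ⁻¹`, hence also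
`-(λ - λ⁻¹) ^ 2 = 4 - (λ + λ⁻¹) ^ 2`.
-/

theorem map_eq_map_of_mul_eq_one {M N F : Type*} [CommMonoid M] [Monoid N] [FunLike F M N]
    [MonoidHomClass F M N] {f g : F} {a b : M} (ha : f a = g a) (hab : a * b = 1) : f b = g b := by
  have hf : f b * f a = 1 := map_mul_eq_one f (by rw [mul_comm, hab])
  have hg : f a * g b = 1 := by rw [ha, map_mul_eq_one g hab]
  exact left_inv_eq_right_inv hf hg

theorem pow_eq_self_or_eq_inv_of_dvd {G : Type*} [Group G] {g : G} {n q : ℕ} (hg : g ^ n = 1)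
    (hq : q ≠ 0) (hdiv : n ∣ q + 1 ∨ n ∣ q - 1) : g ^ q = g ∨ g ^ q = g⁻¹ := by
  rcases hdiv with ⟨k, hk⟩ | ⟨k, hk⟩
  · exact .inr (eq_inv_of_mul_eq_one_left (by rw [← pow_succ, hk, pow_mul, hg, one_pow]))
  · exact .inl (by rw [← mul_pow_sub_one hq, hk, pow_mul, hg, one_pow, mul_one])

section Frobenius

variable (R : Type*) [CommRing R] (p s : ℕ) [Fact p.Prime]

/-- The `s`-fold Frobenius `x ↦ x ^ p ^ s` as a ring homomorphism from `R` to its reduction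
modulo `p`. In contrast to `iterateFrobenius` for `R ⧸ (p)`, it is available when `p` is a unit
of `R`, where the quotient is trivial and does not have characteristic `p`. -/
def frobeniusMod : R →+* R ⧸ Ideal.span {(p : R)} where
  toFun x := Ideal.Quotient.mk _ (x ^ p ^ s)
  map_one' := by rw [one_pow, map_one]
  map_mul' x y := by rw [mul_pow, map_mul]
  map_zero' := by rw [zero_pow (pow_ne_zero s (Fact.out : p.Prime).ne_zero), map_zero]
  map_add' x y := by
    obtain ⟨z, hz⟩ := exists_add_pow_prime_pow_eq (Fact.out : p.Prime) x y s
    rw [← map_add, Ideal.Quotient.eq, Ideal.mem_span_singleton, hz]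
    exact ⟨x * y * z, by ring⟩

/-- The subring of elements `x` of `R` with `x ^ p ^ s ≡ x` modulo `p`. -/
def frobeniusFixedSubring : Subring R :=
  (frobeniusMod R p s).eqLocus (Ideal.Quotient.mk _)

variable {R p s}

theorem mem_frobeniusFixedSubring_iff_dvd {x : R} :
    x ∈ frobeniusFixedSubring R p s ↔ (p : R) ∣ x ^ p ^ s - x :=
  Ideal.Quotient.eq.trans Ideal.mem_span_singleton

theorem add_inv_mem_frobeniusFixedSubring {ζ : Rˣ} (hζ : ζ ^ p ^ s = ζ ∨ ζ ^ p ^ s = ζ⁻¹) :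
    (ζ + ↑ζ⁻¹ : R) ∈ frobeniusFixedSubring R p s := by
  have apply_unit (v : Rˣ) : frobeniusMod R p s v = Ideal.Quotient.mk _ ↑(v ^ p ^ s) := by
    rw [Units.val_pow_eq_pow_val]; rfl
  change frobeniusMod R p s (ζ + ↑ζ⁻¹) = Ideal.Quotient.mk _ (↑ζ + ↑ζ⁻¹ : R)
  rw [map_add, map_add, apply_unit, apply_unit, inv_pow]
  rcases hζ with hfix | hswap
  · rw [hfix]
  · rw [hswap, inv_inv, add_comm]

theorem neg_sub_inv_sq_mem_frobeniusFixedSubring {ζ : Rˣ}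
    (hζ : ζ ^ p ^ s = ζ ∨ ζ ^ p ^ s = ζ⁻¹) :
    (-(ζ - ↑ζ⁻¹) ^ 2 : R) ∈ frobeniusFixedSubring R p s := by
  have sq_eq : (-(ζ - ↑ζ⁻¹) ^ 2 : R) = (4 : ℕ) - (ζ + ↑ζ⁻¹) ^ 2 := by
    push_cast
    linear_combination 4 * ζ.mul_inv
  rw [sq_eq]
  exact sub_mem (natCast_mem _ 4) (pow_mem (add_inv_mem_frobeniusFixedSubring hζ) 2)

end Frobenius

theorem prime_dvd_neg_sub_inv_sq_mul_pow_sub_self {R : Type*} [CommRing R] {p s n m : ℕ}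
    (hp : p.Prime) {ζ : Rˣ} (hζ : ζ ^ n = 1) (hdiv : n ∣ p ^ s + 1 ∨ n ∣ p ^ s - 1) {u : R}
    (hu : m * u = 1) :
    (p : R) ∣ (-(ζ - ↑ζ⁻¹) ^ 2 * u) ^ p ^ s - -(ζ - ↑ζ⁻¹) ^ 2 * u := by
  have : Fact p.Prime := ⟨hp⟩
  have hζq := pow_eq_self_or_eq_inv_of_dvd hζ (pow_ne_zero s hp.ne_zero) hdiv
  have hu_fixed : u ∈ frobeniusFixedSubring R p s :=
    map_eq_map_of_mul_eq_one (natCast_mem (frobeniusFixedSubring R p s) m) hu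
  exact mem_frobeniusFixedSubring_iff_dvd.mp <|
    mul_mem (neg_sub_inv_sq_mem_frobeniusFixedSubring hζq) hu_fixed

theorem stmt_3_general {K : Type*} [Field K] {p s n m : ℕ} (hp : p.Prime) (hn : n ≠ 0)
    (hm : (m : K) ≠ 0) {ζ : K} (hζ : ζ ^ n = 1) (hdiv : n ∣ p ^ s + 1 ∨ n ∣ p ^ s - 1) :
    ∃ z ∈ Subring.closure {ζ, (m : K)⁻¹},
      (-(ζ - ζ⁻¹) ^ 2 / m) ^ p ^ s - -(ζ - ζ⁻¹) ^ 2 / m = p * z := by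
  set A := Subring.closure {ζ, (m : K)⁻¹}
  let ζA : A := ⟨ζ, Subring.subset_closure (by simp)⟩
  let u : A := ⟨(m : K)⁻¹, Subring.subset_closure (by simp)⟩
  let ζU : Aˣ := .ofPowEqOne ζA n (Subtype.ext hζ) hn
  have coe_inv : ((ζU⁻¹ : Aˣ) : K) = ζ⁻¹ := map_units_inv A.subtype ζU
  have hu : (m : A) * u = 1 := Subtype.ext (mul_inv_cancel₀ hm)
  obtain ⟨z, hz⟩ :=
    prime_dvd_neg_sub_inv_sq_mul_pow_sub_self hp (Units.pow_ofPowEqOne _ hn : ζU ^ n = 1) hdiv hu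
  refine ⟨z, z.2, ?_⟩
  rw [div_eq_mul_inv, ← coe_inv]
  exact congrArg A.subtype hz

/-- Second part of Lemma 3: if `2r` divides `p^s + 1` or `p^s - 1` (`p` an odd
prime, `s ≥ 1`, `r ≥ 2`) and `η² = -(λ - λ⁻¹)²/(2r)`, then
`(η²)^{p^s} ≡ η² (mod p)` in `A_r = ℤ[1/(2r)][λ]`. -/
theorem stmt_3 (p s r : ℕ) (hp : p.Prime) (hodd : Odd p) (hs : 1 ≤ s) (hr : 2 ≤ r)
    (lam : ℂ) (hlam : lam = Complex.exp (2 * Real.pi * Complex.I / (2 * r)))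
    (hdiv : (2 * r) ∣ (p ^ s + 1) ∨ (2 * r) ∣ (p ^ s - 1))
    (η2 : ℂ) (hη2 : η2 = -(lam - lam⁻¹) ^ 2 / (2 * r)) :
    ∃ z ∈ Subring.closure {lam, ((2 * (r : ℂ)))⁻¹},
      η2 ^ (p ^ s) - η2 = (p : ℂ) * z := by
  have hn : 2 * r ≠ 0 := by omega
  have hroot : lam ^ (2 * r) = 1 := by
    simpa [hlam] using (Complex.isPrimitiveRoot_exp (2 * r) hn).pow_eq_one
  simpa [hη2] using stmt_3_general hp hn (Nat.cast_ne_zero.mpr hn) hroot hdiv
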